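/- Two AMP chain graphs G and H over the same finite vertex set V are Markov equivalent if and only if they represent the same separations, i.e. the set of probability distributions on ℝ^V satisfying the global Markov property with respect to G equals the set satisfying it with respect to H if and only if, for all pairwise disjoint X, Y, Z ⊆ V, X ⊥_G Y | Z holds exactly when X ⊥_H Y | Z holds. -/

import Mathlib

open Matrix MeasureTheory ProbabilityTheory

attribute [local instance] Classical.propDecidable

noncomputable section

variable {V : Type*}

/-- The submatrix of `S` with rows indexed by `X` and columns indexed by `Y`. -/
def msub (S : Matrix V V ℝ) (X Y : Finset V) : Matrix X Y ℝ :=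
  Matrix.of fun i j => S i.1 j.1

/-- Conditional independence `X ⊥ Y | Z` for a centered Gaussian distribution with
positive definite covariance matrix `S`:  `Σ_{X,Y} − Σ_{X,Z} (Σ_{Z,Z})⁻¹ Σ_{Z,Y} = 0`. -/
def gaussCI [Fintype V] [DecidableEq V] (S : Matrix V V ℝ) (X Y Z : Finset V) : Prop :=
  msub S X Y - msub S X Z * (msub S Z Z)⁻¹ * msub S Z Y = 0

/-- Pairwise disjointness of three sets. -/
def PDisj (X Y Z : Finset V) : Prop :=
  Disjoint X Y ∧ Disjoint X Z ∧ Disjoint Y Z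

/-- Pairwise disjointness of four sets. -/
def PDisj4 (X Y W Z : Finset V) : Prop :=
  Disjoint X Y ∧ Disjoint X W ∧ Disjoint X Z ∧ Disjoint Y W ∧ Disjoint Y Z ∧ Disjoint W Z

/-- A graph with three kinds of edges: undirected (`undir`), solid directed (`solid`,
written `A → B`) and dashed directed (`dashed`, written `A ⇢ B`).  No axioms are imposed. -/
structure PreGraph (V : Type*) where
  undir : V → V → Prop
  solid : V → V → Prop
  dashed : V → V → Prop

namespace PreGraph

variable (G : PreGraph V)

/-- There is an undirected edge between `a` and `b`. -/
def und (a b : V) : Prop := G.undir a b ∨ G.undir b a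

/-- `a` and `b` are adjacent. -/
def adj (a b : V) : Prop :=
  G.und a b ∨ G.solid a b ∨ G.solid b a ∨ G.dashed a b ∨ G.dashed b a

/-- The edge between `a` and `b` is undirected or directed (solid or dashed) from `a` to `b`. -/
def fwd (a b : V) : Prop := G.und a b ∨ G.solid a b ∨ G.dashed a b

/-- A route in `G`: a sequence of nodes `nodes 0, nodes 1, …, nodes len` such that
consecutive nodes are adjacent. -/
structure Route (G : PreGraph V) where
  len : ℕ
  nodes : ℕ → V
  adj_step : ∀ i < len, G.adj (nodes i) (nodes (i + 1))

/-- `c` is a collider node between `a` and `b`:  `a ⇢ c ⇠ b`, `a ⇢ c − b` (in either of the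
two traversal directions) or `a ⇢ c ← b` (in either of the two traversal directions). -/
def colliderTriple (a c b : V) : Prop :=
  (G.dashed a c ∧ G.dashed b c) ∨
  (G.dashed a c ∧ G.und c b) ∨ (G.und a c ∧ G.dashed b c) ∨
  (G.dashed a c ∧ G.solid b c) ∨ (G.solid a c ∧ G.dashed b c)

variable {G} in
/-- The node at position `k` of the route `ρ` is a collider node of `ρ`. -/
def Route.colliderNodeAt (ρ : G.Route) (k : ℕ) : Prop :=
  1 ≤ k ∧ k < ρ.len ∧ G.colliderTriple (ρ.nodes (k - 1)) (ρ.nodes k) (ρ.nodes (k + 1))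

variable {G} in
/-- The positions `p, …, q` of `ρ` form a collider section of `ρ`, i.e. a maximal undirected
subroute `C1 − ⋯ − Cn` of `ρ` such that `A → C1 − ⋯ − Cn ← B` is a subroute of `ρ`. -/
def Route.colliderSectionOcc (ρ : G.Route) (p q : ℕ) : Prop :=
  1 ≤ p ∧ p ≤ q ∧ q + 1 ≤ ρ.len ∧
  (∀ m, p ≤ m → m < q → G.und (ρ.nodes m) (ρ.nodes (m + 1))) ∧
  G.solid (ρ.nodes (p - 1)) (ρ.nodes p) ∧ G.solid (ρ.nodes (q + 1)) (ρ.nodes q)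

variable {G} in
/-- The node at position `k` of `ρ` lies in a collider section of `ρ`. -/
def Route.inColliderSectionAt (ρ : G.Route) (k : ℕ) : Prop :=
  ∃ p q, ρ.colliderSectionOcc p q ∧ p ≤ k ∧ k ≤ q

variable {G} in
/-- The route `ρ` is `Z`-open: (i) all collider nodes are in `Z`, (ii) every collider
section contains some node of `Z`, and (iii) every node which is neither a collider node
nor inside a collider section is outside `Z`. -/
def Route.IsZOpen (ρ : G.Route) (Z : Finset V) : Prop :=
  (∀ k, ρ.colliderNodeAt k → ρ.nodes k ∈ Z) ∧
  (∀ p q, ρ.colliderSectionOcc p q → ∃ m, p ≤ m ∧ m ≤ q ∧ ρ.nodes m ∈ Z) ∧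
  (∀ k ≤ ρ.len, ¬ ρ.colliderNodeAt k → ¬ ρ.inColliderSectionAt k → ρ.nodes k ∉ Z)

variable {G} in
/-- A pure collider route (with at least one edge): every intermediate node is a collider
node or lies in a collider section of the route. -/
def Route.IsPureCollider (ρ : G.Route) : Prop :=
  1 ≤ ρ.len ∧ ∀ k, 0 < k → k < ρ.len → ρ.colliderNodeAt k ∨ ρ.inColliderSectionAt k

/-- Separation `X ⊥_G Y | Z`: there is no `Z`-open route in `G` between a node of `X` and a
node of `Y`. -/
def Sep (X Y Z : Finset V) : Prop :=
  ¬ ∃ ρ : G.Route,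
      ((ρ.nodes 0 ∈ X ∧ ρ.nodes ρ.len ∈ Y) ∨ (ρ.nodes 0 ∈ Y ∧ ρ.nodes ρ.len ∈ X)) ∧
      ρ.IsZOpen Z

section Finite

variable [Fintype V] [DecidableEq V]

/-- The fathers of `X`: nodes `b` with `b → a` in `G` for some `a ∈ X`. -/
def fa (X : Finset V) : Finset V := Finset.univ.filter fun b => ∃ a ∈ X, G.solid b a

/-- The mothers of `X`: nodes `b` with `b ⇢ a` in `G` for some `a ∈ X`. -/
def mo (X : Finset V) : Finset V := Finset.univ.filter fun b => ∃ a ∈ X, G.dashed b a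

/-- The parents of `X`. -/
def pa (X : Finset V) : Finset V := G.fa X ∪ G.mo X

/-- The neighbors of `X`: nodes `b` with `b − a` in `G` for some `a ∈ X`. -/
def nb (X : Finset V) : Finset V := Finset.univ.filter fun b => ∃ a ∈ X, G.und b a

/-- There is a descending route from `a` to `b`: all edges undirected or directed in the
direction of travel, containing at least one directed edge. -/
def descends (a b : V) : Prop :=
  ∃ (n : ℕ) (f : ℕ → V), f 0 = a ∧ f n = b ∧ (∀ i < n, G.fwd (f i) (f (i + 1))) ∧
    ∃ i < n, G.solid (f i) (f (i + 1)) ∨ G.dashed (f i) (f (i + 1))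

/-- The non-descendants of `X`. -/
def nd (X : Finset V) : Finset V := Finset.univ.filter fun b => ¬ ∃ a ∈ X, G.descends a b

/-- Connectivity by undirected routes. -/
def uconn : V → V → Prop := Relation.ReflTransGen G.und

/-- The chain component containing `i`. -/
def cc (i : V) : Finset V := Finset.univ.filter fun j => G.uconn i j

/-- The set of chain components of `G`. -/
def ccs : Finset (Finset V) := Finset.univ.image G.cc

/-- The nodes incident to some edge of `G`. -/
def verts : Finset V := Finset.univ.filter fun a => ∃ b, G.adj a b

/-- `π` is a topological ordering of the chain components: it is constant on components and
increases along directed edges. -/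
def IsTopoOrder (π : V → ℕ) : Prop :=
  (∀ a b, G.uconn a b → π a = π b) ∧ ∀ a b, G.solid a b ∨ G.dashed a b → π a < π b

/-- Equation 1: for every topological ordering of the chain components, each component `K`
is independent of the preceding components minus `Pa(K)` given `Pa(K)`. -/
def eq1 (S : Matrix V V ℝ) : Prop :=
  ∀ π : V → ℕ, G.IsTopoOrder π → ∀ i : V,
    gaussCI S (G.cc i) ((Finset.univ.filter fun b => π b < π i) \ G.pa (G.cc i))
      (G.pa (G.cc i))

/-- The regression coefficients `β_K = Σ_{K,Pa(K)} (Σ_{Pa(K),Pa(K)})⁻¹`. -/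
def beta (S : Matrix V V ℝ) (K : Finset V) : Matrix K (G.pa K) ℝ :=
  msub S K (G.pa K) * (msub S (G.pa K) (G.pa K))⁻¹

/-- The conditional covariance matrix `Λ_K`. -/
def lam (S : Matrix V V ℝ) (K : Finset V) : Matrix K K ℝ :=
  msub S K K - msub S K (G.pa K) * (msub S (G.pa K) (G.pa K))⁻¹ * msub S (G.pa K) K

/-- The precision matrix `Ω = (Σ_{K ∪ Pa(K), K ∪ Pa(K)})⁻¹`. -/
def om (S : Matrix V V ℝ) (K : Finset V) : Matrix ↥(K ∪ G.pa K) ↥(K ∪ G.pa K) ℝ :=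
  (msub S (K ∪ G.pa K) (K ∪ G.pa K))⁻¹

/-- Equation 6: `(β_K)_{i,j} = 0` for all `i ∈ K` and `j ∈ Mo(K) ∖ Mo(i)`. -/
def eq6 (S : Matrix V V ℝ) : Prop :=
  ∀ K ∈ G.ccs, ∀ i (hi : i ∈ K), ∀ j (hj : j ∈ G.pa K),
    j ∈ G.mo K → j ∉ G.mo {i} → G.beta S K ⟨i, hi⟩ ⟨j, hj⟩ = 0

/-- Equation 7: `Ω_{i,j} = 0` for all `i ∈ K` and `j ∈ Fa(K) ∖ Fa(i)`. -/
def eq7 (S : Matrix V V ℝ) : Prop :=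
  ∀ K ∈ G.ccs, ∀ i (hi : i ∈ K), ∀ j (hj : j ∈ G.pa K),
    j ∈ G.fa K → j ∉ G.fa {i} →
    G.om S K ⟨i, Finset.mem_union_left _ hi⟩ ⟨j, Finset.mem_union_right _ hj⟩ = 0

/-- Equation 8: `(Λ_K⁻¹)_{i,j} = 0` for all `i ∈ K` and `j ∈ K ∖ ({i} ∪ Ne(i))`. -/
def eq8 (S : Matrix V V ℝ) : Prop :=
  ∀ K ∈ G.ccs, ∀ i (hi : i ∈ K), ∀ j (hj : j ∈ K),
    j ≠ i → j ∉ G.nb {i} → (G.lam S K)⁻¹ ⟨i, hi⟩ ⟨j, hj⟩ = 0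

/-- `p` satisfies Equation 1 and the zero restrictions of Equations 6–8 w.r.t. `G`. -/
def eqs (S : Matrix V V ℝ) : Prop := G.eq1 S ∧ G.eq6 S ∧ G.eq7 S ∧ G.eq8 S

/-- The global Markov property with respect to `G`, for an abstract ternary
(conditional-independence) relation `I`. -/
def globalMP (I : Finset V → Finset V → Finset V → Prop) : Prop :=
  ∀ X Y Z : Finset V, PDisj X Y Z → G.Sep X Y Z → I X Y Z

/-- The block-recursive Markov property (B1)–(B3) with respect to `G`. -/
def blockRecMP (I : Finset V → Finset V → Finset V → Prop) : Prop :=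
  ∀ K ∈ G.ccs, ∀ i ∈ K,
    I {i} (((G.nd K \ K) \ G.fa K) \ G.mo {i}) (G.fa K ∪ G.mo {i}) ∧
    I {i} (((G.nd K \ K) \ G.fa {i}) \ G.mo K) ((K \ {i}) ∪ G.fa {i} ∪ G.mo K) ∧
    ∀ j ∈ K, j ≠ i → j ∉ G.nb {i} → I {i} {j} ((K \ {i, j}) ∪ G.pa K)

/-- The pairwise Markov property (P1)–(P2) with respect to `G`. -/
def pairwiseMP (I : Finset V → Finset V → Finset V → Prop) : Prop :=
  ∀ i j : V, i ≠ j → ¬ G.adj i j → ∀ K ∈ G.ccs, i ∈ K →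
    (j ∈ ((G.nd {i} \ K) \ G.fa K) \ G.mo {i} → I {i} {j} ((G.nd {i} \ K) \ {j})) ∧
    (j ∈ ((G.nd {i} \ {i}) \ G.fa {i}) \ G.mo K → I {i} {j} (G.nd {i} \ {i, j}))

/-- The local Markov property (L1)–(L2) with respect to `G`. -/
def localMP (I : Finset V → Finset V → Finset V → Prop) : Prop :=
  ∀ K ∈ G.ccs, ∀ i ∈ K,
    I {i} (((G.nd {i} \ K) \ G.fa K) \ G.mo {i}) (G.fa K ∪ G.mo {i}) ∧
    I {i} ((((G.nd {i} \ {i}) \ G.pa {i}) \ G.nb {i}) \ G.mo (G.nb {i}))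
      (G.pa {i} ∪ G.nb {i} ∪ G.mo (G.nb {i}))

/-- The subgraph `G^U`: it keeps the edge `A ⊸ B` (with its type and orientation) iff `G`
has a route `A ⊸ B ⊸ ⋯ ⊸ C` with `C ∈ U`, all edges undirected or directed in the
direction of travel, and no subroute `R ⇢ S − T`. -/
def goodFrom (U : Finset V) (a b : V) : Prop :=
  ∃ (f : ℕ → V) (n : ℕ), 1 ≤ n ∧ f 0 = a ∧ f 1 = b ∧ f n ∈ U ∧
    (∀ i < n, G.fwd (f i) (f (i + 1))) ∧
    ∀ i, i + 2 ≤ n → ¬ (G.dashed (f i) (f (i + 1)) ∧ G.und (f (i + 1)) (f (i + 2)))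

/-- The graph `G^U`. -/
def derived (U : Finset V) : PreGraph V where
  undir a b := G.undir a b ∧ G.goodFrom U a b
  solid a b := G.solid a b ∧ G.goodFrom U a b
  dashed a b := G.dashed a b ∧ G.goodFrom U a b

/-- The set `Y'` used in Lemmas 2 and 3:
`Y' = {B' ∈ V(G^{X∪Y∪Z}) ∖ (X ∪ Z) : X ⊥_{G^{X∪Y∪Z}} B' | Z}`. -/
def derivedYp (X Y Z : Finset V) : Finset V :=
  ((G.derived (X ∪ Y ∪ Z)).verts \ (X ∪ Z)).filter fun b =>
    (G.derived (X ∪ Y ∪ Z)).Sep X {b} Z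

/-- The set `X' = V(G^{X∪Y∪Z}) ∖ (Y' ∪ Z)` used in Lemmas 2 and 3. -/
def derivedXp (X Y Z : Finset V) : Finset V :=
  (G.derived (X ∪ Y ∪ Z)).verts \ (G.derivedYp X Y Z ∪ Z)

end Finite

end PreGraph

/-- A chain graph: at most one edge between any pair of distinct nodes (undirected, solid
directed, or dashed directed) and no semidirected cycles. -/
structure ChainGraph (V : Type*) extends PreGraph V where
  undir_symm : ∀ a b, toPreGraph.undir a b → toPreGraph.undir b a
  undir_irrefl : ∀ a, ¬ toPreGraph.undir a a
  solid_irrefl : ∀ a, ¬ toPreGraph.solid a a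
  dashed_irrefl : ∀ a, ¬ toPreGraph.dashed a a
  undir_not_solid : ∀ a b, toPreGraph.undir a b → ¬ toPreGraph.solid a b
  undir_not_dashed : ∀ a b, toPreGraph.undir a b → ¬ toPreGraph.dashed a b
  solid_not_solid : ∀ a b, toPreGraph.solid a b → ¬ toPreGraph.solid b a
  solid_not_dashed : ∀ a b, toPreGraph.solid a b → ¬ toPreGraph.dashed a b
  solid_not_dashed_rev : ∀ a b, toPreGraph.solid a b → ¬ toPreGraph.dashed b a
  dashed_not_dashed : ∀ a b, toPreGraph.dashed a b → ¬ toPreGraph.dashed b a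
  no_semidirected_cycle : ¬ ∃ (f : ℕ → V) (n : ℕ), 1 ≤ n ∧ f n = f 0 ∧
    (toPreGraph.solid (f 0) (f 1) ∨ toPreGraph.dashed (f 0) (f 1)) ∧
    ∀ i < n, toPreGraph.fwd (f i) (f (i + 1))

namespace ChainGraph

variable (G : ChainGraph V)

/-- An LWF chain graph: no dashed directed edges. -/
def IsLWF : Prop := ∀ a b, ¬ G.toPreGraph.dashed a b

/-- An AMP chain graph: no solid directed edges. -/
def IsAMP : Prop := ∀ a b, ¬ G.toPreGraph.solid a b

/-- A unified chain graph: `Fa(K) ∩ Mo(K) = ∅` for every chain component `K`. -/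
def IsUCG [Fintype V] [DecidableEq V] : Prop :=
  ∀ K ∈ G.toPreGraph.ccs, Disjoint (G.toPreGraph.fa K) (G.toPreGraph.mo K)

end ChainGraph


/-- The AMP chain graph obtained from `G` by deleting every solid directed edge. -/
def ChainGraph.dropSolid (G : ChainGraph V) : ChainGraph V where
  undir := G.toPreGraph.undir
  solid _ _ := False
  dashed := G.toPreGraph.dashed
  undir_symm := G.undir_symm
  undir_irrefl := G.undir_irrefl
  solid_irrefl _ h := h
  dashed_irrefl := G.dashed_irrefl
  undir_not_solid _ _ _ h := h
  undir_not_dashed := G.undir_not_dashed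
  solid_not_solid _ _ h := h.elim
  solid_not_dashed _ _ h := h.elim
  solid_not_dashed_rev _ _ h := h.elim
  dashed_not_dashed := G.dashed_not_dashed
  no_semidirected_cycle := fun ⟨f, n, hn, hcyc, hstart, hsteps⟩ =>
    G.no_semidirected_cycle ⟨f, n, hn, hcyc, Or.inr (hstart.resolve_left id),
      fun i hi => (hsteps i hi).imp id (Or.imp False.elim id)⟩

/-- The restriction of `ω : V → ℝ` to the coordinates in `S`. -/
def marg (S : Finset V) : (V → ℝ) → (S → ℝ) := fun ω s => ω s.1

lemma marg_measurable (S : Finset V) : Measurable (marg (V := V) S) :=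
  measurable_pi_lambda _ fun s => measurable_pi_apply s.1

/-- Conditional independence of the coordinate tuples indexed by `X` and `Y` given the
coordinate tuple indexed by `Z`, for a distribution `μ` on `ℝ^V`. -/
def mCI [Fintype V] (μ : Measure (V → ℝ)) [IsFiniteMeasure μ] (X Y Z : Finset V) : Prop :=
  CondIndepFun (MeasurableSpace.comap (marg Z) inferInstance) ((marg_measurable Z).comap_le)
    (marg X) (marg Y) μ

/-- A probability distribution `μ` on `ℝ^V` satisfies the global Markov property with
respect to `G`. -/
def measGlobalMarkov [Fintype V] [DecidableEq V] (G : PreGraph V) (μ : Measure (V → ℝ))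
    [IsFiniteMeasure μ] : Prop :=
  ∀ X Y Z : Finset V, PDisj X Y Z → G.Sep X Y Z → mCI μ X Y Z

/-- A graphoid over `V`: a ternary relation on pairwise disjoint subsets of `V` satisfying
symmetry, decomposition, weak union, contraction and intersection. -/
structure Graphoid (V : Type*) [DecidableEq V] where
  rel : Finset V → Finset V → Finset V → Prop
  symmetry : ∀ X Y Z : Finset V, PDisj X Y Z → rel X Y Z → rel Y X Z
  decomposition : ∀ X Y W Z : Finset V, PDisj4 X Y W Z → rel X (Y ∪ W) Z → rel X Y Z
  weakUnion : ∀ X Y W Z : Finset V, PDisj4 X Y W Z → rel X (Y ∪ W) Z → rel X Y (Z ∪ W)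
  contraction : ∀ X Y W Z : Finset V, PDisj4 X Y W Z →
    rel X Y (Z ∪ W) → rel X W Z → rel X (Y ∪ W) Z
  intersection : ∀ X Y W Z : Finset V, PDisj4 X Y W Z →
    rel X Y (Z ∪ W) → rel X W (Z ∪ Y) → rel X (Y ∪ W) Z

/-- The conditional variance `Σ_{a,a|B} = Σ_{a,a} − Σ_{a,B} (Σ_{B,B})⁻¹ Σ_{B,a}`. -/
def condVar [Fintype V] [DecidableEq V] (S : Matrix V V ℝ) (a : V) (B : Finset V) : ℝ :=
  S a a - ∑ b₁ : B, ∑ b₂ : B, S a b₁.1 * (msub S B B)⁻¹ b₁ b₂ * S b₂.1 a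

/-- On the fiber of `f` through `x`, the conditional probability given `f` is the ratio of the
fiber masses. -/
lemma condExp_indicator_mul_measureReal_fiber {E F : Type*} [mE : MeasurableSpace E]
    [mF : MeasurableSpace F] [MeasurableSingletonClass F] (μ : Measure E) [IsFiniteMeasure μ]
    {f : E → F} (hf : Measurable f) {A : Set E} (hA : MeasurableSet A) (x : E) :
    (μ⟦A | mF.comap f⟧) x * μ.real (f ⁻¹' {f x}) = μ.real (A ∩ f ⁻¹' {f x}) := by
  have hC : MeasurableSet[mF.comap f] (f ⁻¹' {f x}) := ⟨_, measurableSet_singleton _, rfl⟩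
  have hconst : Set.EqOn (μ⟦A | mF.comap f⟧) (fun _ => (μ⟦A | mF.comap f⟧) x) (f ⁻¹' {f x}) :=
    fun y hy => stronglyMeasurable_condExp.factorsThrough hy
  have h := setIntegral_condExp hf.comap_le
    ((integrable_const (μ := μ) (1 : ℝ)).indicator hA) hC
  rw [setIntegral_congr_fun (hf.comap_le _ hC) hconst, setIntegral_const,
    setIntegral_indicator hA, setIntegral_const] at h
  simpa [mul_comm, Set.inter_comm] using h

section UniformLaw

variable {Ω : Type*} [Fintype Ω] [Nonempty Ω] [MeasurableSpace Ω] [DiscreteMeasurableSpace Ω]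

/-- The law of a random element defined on a finite space with the uniform distribution. -/
def uniformLaw {E : Type*} [MeasurableSpace E] (X : Ω → E) : Measure E :=
  (uniformOn Set.univ).map X

instance {E : Type*} [MeasurableSpace E] (X : Ω → E) : IsProbabilityMeasure (uniformLaw X) :=
  Measure.isProbabilityMeasure_map (Measurable.of_discrete (f := X)).aemeasurable

omit [Nonempty Ω] in
lemma uniformLaw_real_apply {E : Type*} [MeasurableSpace E] (X : Ω → E) {A : Set E}
    (hA : MeasurableSet A) :
    (uniformLaw X).real A = (X ⁻¹' A).ncard / Fintype.card Ω := by
  rw [uniformLaw, map_measureReal_apply Measurable.of_discrete hA, measureReal_def,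
    uniformOn_univ, Measure.count_apply .of_discrete, ENNReal.toReal_div]
  rw [← Set.Finite.cast_ncard_eq (Set.toFinite _), ENat.toENNReal_coe]
  simp

/-- Conditional independence under a finitely supported law, expressed by counting. -/
lemma condIndepFun_uniformLaw_iff {E F β γ : Type*} [MeasurableSpace E] [StandardBorelSpace E]
    [mF : MeasurableSpace F] [MeasurableSingletonClass F] [MeasurableSpace β] [MeasurableSpace γ]
    (X : Ω → E) {f : E → F} {g : E → β} {h : E → γ} (hf : Measurable f) (hg : Measurable g)
    (hh : Measurable h) :
    CondIndepFun (mF.comap f) hf.comap_le g h (uniformLaw X) ↔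
      ∀ s t, MeasurableSet s → MeasurableSet t → ∀ ω₀ : Ω,
        {ω | g (X ω) ∈ s ∧ h (X ω) ∈ t ∧ f (X ω) = f (X ω₀)}.ncard *
            {ω | f (X ω) = f (X ω₀)}.ncard =
          {ω | g (X ω) ∈ s ∧ f (X ω) = f (X ω₀)}.ncard *
            {ω | h (X ω) ∈ t ∧ f (X ω) = f (X ω₀)}.ncard := by
  rw [condIndepFun_iff_condExp_inter_preimage_eq_mul hg hh]
  refine forall₄_congr fun s t hs ht => ?_
  have hN : (0 : ℝ) < Fintype.card Ω := by exact_mod_cast Fintype.card_pos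
  have key (ω₀ : Ω) :
      ((uniformLaw X)⟦g ⁻¹' s ∩ h ⁻¹' t | mF.comap f⟧) (X ω₀) =
        ((uniformLaw X)⟦g ⁻¹' s | mF.comap f⟧) (X ω₀) *
          ((uniformLaw X)⟦h ⁻¹' t | mF.comap f⟧) (X ω₀) ↔
      {ω | g (X ω) ∈ s ∧ h (X ω) ∈ t ∧ f (X ω) = f (X ω₀)}.ncard *
          {ω | f (X ω) = f (X ω₀)}.ncard =
        {ω | g (X ω) ∈ s ∧ f (X ω) = f (X ω₀)}.ncard *
          {ω | h (X ω) ∈ t ∧ f (X ω) = f (X ω₀)}.ncard := by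
    have hC : MeasurableSet (f ⁻¹' {f (X ω₀)}) := hf (measurableSet_singleton _)
    have h₁ := condExp_indicator_mul_measureReal_fiber (uniformLaw X) hf
      ((hg hs).inter (hh ht)) (X ω₀)
    have h₂ := condExp_indicator_mul_measureReal_fiber (uniformLaw X) hf (hg hs) (X ω₀)
    have h₃ := condExp_indicator_mul_measureReal_fiber (uniformLaw X) hf (hh ht) (X ω₀)
    rw [uniformLaw_real_apply X hC, uniformLaw_real_apply X (((hg hs).inter (hh ht)).inter hC)]
      at h₁
    rw [uniformLaw_real_apply X hC, uniformLaw_real_apply X ((hg hs).inter hC)] at h₂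
    rw [uniformLaw_real_apply X hC, uniformLaw_real_apply X ((hh ht).inter hC)] at h₃
    have hpos : (0 : ℝ) < (X ⁻¹' (f ⁻¹' {f (X ω₀)})).ncard := by
      refine Nat.cast_pos.2 ((Set.ncard_pos (Set.toFinite _)).2 ⟨ω₀, ?_⟩)
      exact rfl
    have e₁ : X ⁻¹' (g ⁻¹' s ∩ h ⁻¹' t ∩ f ⁻¹' {f (X ω₀)}) =
        {ω | g (X ω) ∈ s ∧ h (X ω) ∈ t ∧ f (X ω) = f (X ω₀)} := by
      ext; simp [and_assoc]
    have e₂ : X ⁻¹' (g ⁻¹' s ∩ f ⁻¹' {f (X ω₀)}) =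
        {ω | g (X ω) ∈ s ∧ f (X ω) = f (X ω₀)} := rfl
    have e₃ : X ⁻¹' (h ⁻¹' t ∩ f ⁻¹' {f (X ω₀)}) =
        {ω | h (X ω) ∈ t ∧ f (X ω) = f (X ω₀)} := rfl
    have e₄ : X ⁻¹' (f ⁻¹' {f (X ω₀)}) = {ω | f (X ω) = f (X ω₀)} := rfl
    rw [e₁, e₄] at h₁
    rw [e₂, e₄] at h₂
    rw [e₃, e₄] at h₃
    rw [e₄] at hpos
    rw [← Nat.cast_inj (R := ℝ)]
    push_cast
    rw [mul_div_assoc', div_left_inj' hN.ne'] at h₁ h₂ h₃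
    rw [← h₁, ← h₂, ← h₃]
    constructor
    · intro h
      rw [h]
      ring
    · intro h
      have := mul_pos hpos hpos
      refine mul_right_cancel₀ this.ne' ?_
      linarith
  constructor
  · intro h ω₀
    have hae := ae_of_ae_map (Measurable.of_discrete (f := X)).aemeasurable h
    refine (key ω₀).1 ?_
    rw [ae_iff] at hae
    by_contra hne
    have : uniformOn (Set.univ : Set Ω) {ω₀} = 0 :=
      measure_mono_null (Set.singleton_subset_iff.2 hne) hae
    rw [uniformOn_univ, Measure.count_singleton] at this
    simp at this
  · intro h
    have hrange : ∀ᵐ x ∂(uniformLaw X), x ∈ Set.range X :=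
      (ae_map_iff Measurable.of_discrete.aemeasurable (Set.finite_range X).measurableSet).2
        (Filter.Eventually.of_forall fun ω => ⟨ω, rfl⟩)
    filter_upwards [hrange]
    rintro _ ⟨ω₀, rfl⟩
    exact (key ω₀).2 (h ω₀)

end UniformLaw

section PathModel

variable (col : ℕ → Prop)

/-- The last position `j ≤ k` with `col j`, or `0` if there is none. -/
def lastCollider : ℕ → ℕ
  | 0 => 0
  | k + 1 => if col (k + 1) then k + 1 else lastCollider k

lemma lastCollider_le (k : ℕ) : lastCollider col k ≤ k := by
  induction k with
  | zero => exact le_rfl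
  | succ k ih =>
    rw [lastCollider]
    split_ifs <;> omega

lemma not_col_of_lastCollider_lt {k j : ℕ} (h₁ : lastCollider col k < j) (h₂ : j ≤ k) :
    ¬ col j := by
  induction k with
  | zero => omega
  | succ k ih =>
    rw [lastCollider] at h₁
    split_ifs at h₁ with h
    · omega
    · rcases h₂.lt_or_eq with h₂ | rfl
      · exact ih h₁ (by omega)
      · exact h

variable {n : ℕ}

/-- The bit carried by the edge from position `k` to position `k + 1`: the edges between two
consecutive colliders share the same bit. -/
def edgeBit (ω : Fin (n + 1) → Bool) (k : ℕ) : Bool :=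
  ω (Fin.ofNat (n + 1) (lastCollider col k))

/-- The bit of position `k`: a collider carries the sum of the bits of its two edges, any other
position carries the common bit of its edges. -/
def nodeBit (ω : Fin (n + 1) → Bool) (k : ℕ) : Bool :=
  if col k then xor (edgeBit col ω (k - 1)) (edgeBit col ω k) else edgeBit col ω k

variable {col}

lemma edgeBit_succ_of_not_col (ω : Fin (n + 1) → Bool) {k : ℕ} (h : ¬ col (k + 1)) :
    edgeBit col ω (k + 1) = edgeBit col ω k := by
  simp [edgeBit, lastCollider, h]

/-- Two edges are linked given `R` if all the colliders between them belong to `R`. -/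
def EdgesLinked (col R : ℕ → Prop) (e e' : ℕ) : Prop :=
  ∀ k, (e < k ∧ k ≤ e' ∨ e' < k ∧ k ≤ e) → col k → R k

lemma EdgesLinked.trans {R : ℕ → Prop} {a b c : ℕ} (h₁ : EdgesLinked col R a b)
    (h₂ : EdgesLinked col R b c) : EdgesLinked col R a c := by
  intro k hk hc
  by_cases h : a < k ∧ k ≤ b ∨ b < k ∧ k ≤ a
  · exact h₁ k h hc
  · exact h₂ k (by omega) hc

lemma EdgesLinked.symm {R : ℕ → Prop} {a b : ℕ} (h : EdgesLinked col R a b) :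
    EdgesLinked col R b a :=
  fun k hk => h k hk.symm

lemma edgesLinked_lastCollider (col R : ℕ → Prop) (e : ℕ) :
    EdgesLinked col R (lastCollider col e) e := by
  intro k hk hc
  have := lastCollider_le col e
  exact (not_col_of_lastCollider_lt col (k := e) (by omega) (by omega) hc).elim

/-- If two outcomes agree at the positions of `R`, then they agree at an edge if and only if they
agree at any edge linked to it. -/
lemma edgeBit_agree_iff_of_linked {R : ℕ → Prop} {ω ω' : Fin (n + 1) → Bool}
    (hR : ∀ k ≤ n, R k → nodeBit col ω k = nodeBit col ω' k) {a b : ℕ} (ha : a ≤ n) (hb : b ≤ n)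
    (h : EdgesLinked col R a b) :
    edgeBit col ω a = edgeBit col ω' a ↔ edgeBit col ω b = edgeBit col ω' b := by
  wlog hab : a ≤ b generalizing a b
  · exact (this hb ha h.symm (by omega)).symm
  induction b, hab using Nat.le_induction with
  | base => rfl
  | succ b hab ih =>
    rw [ih (by omega) fun k hk => h k (by omega)]
    by_cases hc : col (b + 1)
    · have := hR (b + 1) hb (h (b + 1) (by omega) hc)
      simp only [nodeBit, hc, if_true, Nat.add_sub_cancel] at this
      revert this
      generalize edgeBit col ω b = w, edgeBit col ω (b + 1) = x, edgeBit col ω' b = y,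
        edgeBit col ω' (b + 1) = z
      decide +revert
    · rw [edgeBit_succ_of_not_col ω hc, edgeBit_succ_of_not_col ω' hc]

/-- The edges linked given `R` to an edge determining the bit of a position of `P`. -/
def TouchedEdge (col P R : ℕ → Prop) (n e : ℕ) : Prop :=
  ∃ p ≤ n, P p ∧ ∃ e', (e' = p ∨ col p ∧ e' + 1 = p) ∧ EdgesLinked col R e' e

lemma TouchedEdge.congr {P R : ℕ → Prop} {a b : ℕ} (h : EdgesLinked col R a b) :
    TouchedEdge col P R n a ↔ TouchedEdge col P R n b := by
  constructor
  · rintro ⟨p, hp, hP, e', he', hl⟩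
    exact ⟨p, hp, hP, e', he', hl.trans h⟩
  · rintro ⟨p, hp, hP, e', he', hl⟩
    exact ⟨p, hp, hP, e', he', hl.trans h.symm⟩

/-- The outcome that follows `ω` on the edges touched by `P` given `R` and `ω'` elsewhere. -/
def mix (col P R : ℕ → Prop) (ω ω' : Fin (n + 1) → Bool) : Fin (n + 1) → Bool :=
  fun j => if TouchedEdge col P R n j then ω j else ω' j

variable {P Q R : ℕ → Prop}

lemma mix_mix (ω ω' : Fin (n + 1) → Bool) :
    mix col P R (mix col P R ω ω') (mix col P R ω' ω) = ω := by
  funext j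
  simp only [mix]
  split_ifs <;> rfl

lemma edgeBit_mix (ω ω' : Fin (n + 1) → Bool) {e : ℕ} (he : e ≤ n) :
    edgeBit col (mix col P R ω ω') e =
      if TouchedEdge col P R n e then edgeBit col ω e else edgeBit col ω' e := by
  have hval : ((Fin.ofNat (n + 1) (lastCollider col e) : Fin (n + 1)) : ℕ) = lastCollider col e :=
    Nat.mod_eq_of_lt (by have := lastCollider_le col e; omega)
  simp only [edgeBit, mix, hval, TouchedEdge.congr (edgesLinked_lastCollider col R e)]

lemma nodeBit_mix_of_mem_left (ω ω' : Fin (n + 1) → Bool) {k : ℕ} (hk : k ≤ n)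
    (hcol : col k → 1 ≤ k) (hP : P k) :
    nodeBit col (mix col P R ω ω') k = nodeBit col ω k := by
  have hT : TouchedEdge col P R n k := ⟨k, hk, hP, k, Or.inl rfl, fun _ _ => by omega⟩
  by_cases hc : col k
  · have := hcol hc
    have hT' : TouchedEdge col P R n (k - 1) :=
      ⟨k, hk, hP, k - 1, Or.inr ⟨hc, by omega⟩, fun _ _ => by omega⟩
    simp [nodeBit, edgeBit_mix ω ω' hk, edgeBit_mix ω ω' (show k - 1 ≤ n by omega), hT, hT']
  · simp [nodeBit, edgeBit_mix ω ω' hk, hT, hc]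

lemma nodeBit_mix_of_mem_cond {ω ω' : Fin (n + 1) → Bool}
    (hR : ∀ k ≤ n, R k → nodeBit col ω k = nodeBit col ω' k) {k : ℕ} (hk : k ≤ n)
    (hcol : col k → 1 ≤ k) (hRk : R k) :
    nodeBit col (mix col P R ω ω') k = nodeBit col ω k := by
  have hag := hR k hk hRk
  by_cases hc : col k
  · have := hcol hc
    have hT : TouchedEdge col P R n (k - 1) ↔ TouchedEdge col P R n k := by
      refine TouchedEdge.congr fun j hj _ => ?_
      obtain rfl : j = k := by omega
      exact hRk
    simp only [nodeBit, hc, if_true, edgeBit_mix ω ω' hk,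
      edgeBit_mix ω ω' (show k - 1 ≤ n by omega), hT] at hag ⊢
    split_ifs
    · rfl
    · exact hag.symm
  · simp only [nodeBit, hc, if_false, edgeBit_mix ω ω' hk] at hag ⊢
    split_ifs
    · rfl
    · exact hag.symm

lemma nodeBit_mix_of_mem_right {ω ω' : Fin (n + 1) → Bool}
    (hR : ∀ k ≤ n, R k → nodeBit col ω k = nodeBit col ω' k)
    (hsep : ∀ p ≤ n, ∀ q ≤ n, P p → Q q → ∃ k, (p < k ∧ k < q ∨ q < k ∧ k < p) ∧
      (col k ∧ ¬ R k ∨ ¬ col k ∧ R k)) {q : ℕ} (hq : q ≤ n)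
    (hcol : col q → 1 ≤ q) (hQ : Q q) :
    nodeBit col (mix col P R ω ω') q = nodeBit col ω' q := by
  have key (e : ℕ) (he : e = q ∨ col q ∧ e + 1 = q) :
      edgeBit col (mix col P R ω ω') e = edgeBit col ω' e := by
    rw [edgeBit_mix ω ω' (by omega)]
    split_ifs with hT
    · obtain ⟨p, hp, hP, e', he', hl⟩ := hT
      obtain ⟨k, hk, ⟨hc, hRk⟩ | ⟨hc, hRk⟩⟩ := hsep p hp q hq hP hQ
      · exact (hRk (hl k (by omega) hc)).elim
      · have hag := hR k (by omega) hRk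
        simp only [nodeBit, hc, if_false] at hag
        exact (edgeBit_agree_iff_of_linked hR (by omega) (by omega)
          (fun j hj => hl j (by omega))).1 hag
    · rfl
  by_cases hc : col q
  · have := hcol hc
    simp only [nodeBit, hc, if_true, key q (Or.inl rfl),
      key (q - 1) (Or.inr ⟨hc, by omega⟩)]
  · simp only [nodeBit, hc, if_false, key q (Or.inl rfl)]

/-- If all colliders carry the bit `0`, then all edges carry the same bit. -/
lemma edgeBit_eq_of_colliders_eq_false {ω : Fin (n + 1) → Bool}
    (h : ∀ k ≤ n, col k → nodeBit col ω k = false) {k : ℕ} (hk : k ≤ n) :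
    edgeBit col ω k = edgeBit col ω 0 := by
  induction k with
  | zero => rfl
  | succ k ih =>
    rw [← ih (by omega)]
    by_cases hc : col (k + 1)
    · have := h (k + 1) hk hc
      simp only [nodeBit, hc, if_true, Nat.add_sub_cancel] at this
      grind
    · exact edgeBit_succ_of_not_col ω hc

variable {V : Type*} (φ : ℕ → V)

/-- The random vector on `ℝ^V` whose coordinate at `v` encodes the bits of all the positions that
`φ` maps to `v`. -/
def pathVector (col : ℕ → Prop) (n : ℕ) (ω : Fin (n + 1) → Bool) : V → ℝ := fun v =>
  (Encodable.encode fun k : Fin (n + 1) => decide (φ k = v) && nodeBit col ω k : ℕ)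

lemma marg_pathVector_eq_iff (S : Finset V) (ω ω' : Fin (n + 1) → Bool) :
    marg S (pathVector φ col n ω) = marg S (pathVector φ col n ω') ↔
      ∀ k ≤ n, φ k ∈ S → nodeBit col ω k = nodeBit col ω' k := by
  constructor
  · intro h k hk hkS
    have h₁ := congrFun h ⟨φ k, hkS⟩
    simp only [marg, pathVector, Nat.cast_inj, Encodable.encode_inj] at h₁
    simpa using congrFun h₁ ⟨k, by omega⟩
  · intro h
    funext v
    simp only [marg, pathVector, Nat.cast_inj, Encodable.encode_inj]
    funext k
    by_cases hv : φ k = v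
    · simp [hv, h k (by omega) (hv ▸ v.2)]
    · simp [hv]

end PathModel

/-- Counting form of conditional independence: it suffices to mix any two outcomes that agree on
`C` into one that follows the first outcome on `A`, the second one on `B`, and both on `C`. -/
lemma ncard_inter_mul_ncard_eq_of_mix {Ω : Type*} [Finite Ω] {A B C : Set Ω}
    (m : Ω → Ω → Ω) (hm : ∀ ω ω', m (m ω ω') (m ω' ω) = ω)
    (hA : ∀ ω ∈ C, ∀ ω' ∈ C, m ω ω' ∈ A ↔ ω ∈ A)
    (hB : ∀ ω ∈ C, ∀ ω' ∈ C, m ω ω' ∈ B ↔ ω' ∈ B)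
    (hC : ∀ ω ∈ C, ∀ ω' ∈ C, m ω ω' ∈ C) :
    (A ∩ B ∩ C).ncard * C.ncard = (A ∩ C).ncard * (B ∩ C).ncard := by
  rw [← Set.ncard_prod, ← Set.ncard_prod]
  let i : Ω × Ω → Ω × Ω := fun x => (m x.1 x.2, m x.2 x.1)
  have hi (x : Ω × Ω) : i (i x) = x := Prod.ext (hm _ _) (hm _ _)
  refine Set.ncard_congr (fun x _ => i x) ?_ ?_ ?_
  · rintro ⟨ω, ω'⟩ ⟨⟨⟨ha, hb⟩, hc⟩, hc'⟩
    exact ⟨⟨(hA ω hc ω' hc').2 ha, hC ω hc ω' hc'⟩, (hB ω' hc' ω hc).2 hb, hC ω' hc' ω hc⟩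
  · intro x y _ _ hxy
    rw [← hi x, hxy, hi]
  · rintro ⟨ω, ω'⟩ ⟨⟨ha, hc⟩, hb, hc'⟩
    exact ⟨i (ω, ω'), ⟨⟨⟨(hA ω hc ω' hc').2 ha, (hB ω hc ω' hc').2 hb⟩, hC ω hc ω' hc'⟩,
      hC ω' hc' ω hc⟩, hi _⟩

section RouteLaw

variable {V : Type*} [Fintype V] {G : PreGraph V}

namespace PreGraph.Route

/-- The law on `ℝ^V` induced by a route: the random bits of the path model along the route,
collected at the nodes of the graph. -/
def law (ρ : G.Route) : Measure (V → ℝ) :=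
  uniformLaw (pathVector ρ.nodes ρ.colliderNodeAt ρ.len)

instance (ρ : G.Route) : IsProbabilityMeasure ρ.law := by
  unfold law
  infer_instance

omit [Fintype V] in
lemma isZOpen_iff_of_no_solid (hG : ∀ a b, ¬ G.solid a b) (ρ : G.Route) (Z : Finset V) :
    ρ.IsZOpen Z ↔ ∀ k ≤ ρ.len, ρ.colliderNodeAt k ↔ ρ.nodes k ∈ Z := by
  have hsec (p q : ℕ) : ¬ ρ.colliderSectionOcc p q := fun h => hG _ _ h.2.2.2.2.1
  constructor
  · rintro ⟨h₁, -, h₃⟩ k hk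
    refine ⟨h₁ k, fun hZ => ?_⟩
    by_contra hc
    exact h₃ k hk hc (fun ⟨p, q, h, _⟩ => hsec p q h) hZ
  · intro h
    exact ⟨fun k hk => (h k hk.2.1.le).1 hk, fun p q hpq => (hsec p q hpq).elim,
      fun k hk hc _ hZ => hc ((h k hk).2 hZ)⟩

/-- The part of a route between the positions `p` and `q`. -/
def segment (ρ : G.Route) (p q : ℕ) (h : q ≤ ρ.len) : G.Route where
  len := q - p
  nodes i := ρ.nodes (p + i)
  adj_step i hi := ρ.adj_step (p + i) (by omega)

omit [Fintype V] in
lemma segment_colliderNodeAt_iff (ρ : G.Route) {p q : ℕ} (h : q ≤ ρ.len) {k : ℕ} (h₁ : 1 ≤ k)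
    (h₂ : k < q - p) :
    (ρ.segment p q h).colliderNodeAt k ↔ ρ.colliderNodeAt (p + k) := by
  simp only [colliderNodeAt, segment, show p + k - 1 = p + (k - 1) by omega, add_assoc]
  exact ⟨fun h' => ⟨by omega, by omega, h'.2.2⟩, fun h' => ⟨h₁, h₂, h'.2.2⟩⟩

omit [Fintype V] in
/-- If the separation `X ⊥ Y | Z` holds in a graph without solid edges, then every part of a route
joining `X` and `Y` is blocked by an interior position. -/
lemma exists_blocker_of_sep (hG : ∀ a b, ¬ G.solid a b) (ρ : G.Route) {X Y Z : Finset V}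
    (hd : PDisj X Y Z) (hsep : G.Sep X Y Z) {p q : ℕ} (hp : p ≤ ρ.len) (hq : q ≤ ρ.len)
    (hX : ρ.nodes p ∈ X) (hY : ρ.nodes q ∈ Y) :
    ∃ k, (p < k ∧ k < q ∨ q < k ∧ k < p) ∧
      (ρ.colliderNodeAt k ∧ ρ.nodes k ∉ Z ∨ ¬ ρ.colliderNodeAt k ∧ ρ.nodes k ∈ Z) := by
  by_contra! hno
  have key (a b : ℕ) (hab : a < b) (hb : b ≤ ρ.len) (haZ : ρ.nodes a ∉ Z) (hbZ : ρ.nodes b ∉ Z)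
      (h : ∀ k, a < k → k < b → (ρ.colliderNodeAt k ↔ ρ.nodes k ∈ Z)) :
      (ρ.segment a b hb).IsZOpen Z := by
    rw [isZOpen_iff_of_no_solid hG]
    intro k hk
    change k ≤ b - a at hk
    rcases Nat.eq_zero_or_pos k with rfl | hk0
    · exact iff_of_false (fun hc => absurd hc.1 (by omega)) haZ
    rcases hk.lt_or_eq with hlt | rfl
    · rw [segment_colliderNodeAt_iff ρ hb hk0 hlt]
      exact h _ (by omega) (by omega)
    · refine iff_of_false (fun hc => lt_irrefl _ hc.2.1) ?_
      change ρ.nodes (a + (b - a)) ∉ Z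
      rwa [Nat.add_sub_cancel' hab.le]
  have hpZ := Finset.disjoint_left.1 hd.2.1 hX
  have hqZ := Finset.disjoint_left.1 hd.2.2 hY
  rcases lt_trichotomy p q with hpq | rfl | hpq
  · refine hsep ⟨ρ.segment p q hq, Or.inl ⟨hX, ?_⟩, key p q hpq hq hpZ hqZ fun k h₁ h₂ => ?_⟩
    · change ρ.nodes (p + (q - p)) ∈ Y
      rwa [Nat.add_sub_cancel' hpq.le]
    · have := hno k (Or.inl ⟨h₁, h₂⟩)
      tauto
  · exact Finset.disjoint_left.1 hd.1 hX hY
  · refine hsep ⟨ρ.segment q p hp, Or.inr ⟨hY, ?_⟩, key q p hpq hp hqZ hpZ fun k h₁ h₂ => ?_⟩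
    · change ρ.nodes (q + (p - q)) ∈ X
      rwa [Nat.add_sub_cancel' hpq.le]
    · have := hno k (Or.inr ⟨h₁, h₂⟩)
      tauto

lemma mCI_law_iff (ρ : G.Route) (X Y Z : Finset V) :
    mCI ρ.law X Y Z ↔ ∀ s t, MeasurableSet s → MeasurableSet t → ∀ ω₀,
      {ω | marg X (pathVector ρ.nodes ρ.colliderNodeAt ρ.len ω) ∈ s ∧
          marg Y (pathVector ρ.nodes ρ.colliderNodeAt ρ.len ω) ∈ t ∧
          marg Z (pathVector ρ.nodes ρ.colliderNodeAt ρ.len ω) =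
            marg Z (pathVector ρ.nodes ρ.colliderNodeAt ρ.len ω₀)}.ncard *
        {ω | marg Z (pathVector ρ.nodes ρ.colliderNodeAt ρ.len ω) =
            marg Z (pathVector ρ.nodes ρ.colliderNodeAt ρ.len ω₀)}.ncard =
      {ω | marg X (pathVector ρ.nodes ρ.colliderNodeAt ρ.len ω) ∈ s ∧
          marg Z (pathVector ρ.nodes ρ.colliderNodeAt ρ.len ω) =
            marg Z (pathVector ρ.nodes ρ.colliderNodeAt ρ.len ω₀)}.ncard *
        {ω | marg Y (pathVector ρ.nodes ρ.colliderNodeAt ρ.len ω) ∈ t ∧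
          marg Z (pathVector ρ.nodes ρ.colliderNodeAt ρ.len ω) =
            marg Z (pathVector ρ.nodes ρ.colliderNodeAt ρ.len ω₀)}.ncard :=
  condIndepFun_uniformLaw_iff _ (marg_measurable Z) (marg_measurable X) (marg_measurable Y)

/-- In a graph without solid edges, the law of any route satisfies the global Markov property. -/
lemma measGlobalMarkov_law [DecidableEq V] (hG : ∀ a b, ¬ G.solid a b) (ρ : G.Route) :
    measGlobalMarkov G ρ.law := by
  intro X Y Z hd hsep
  rw [mCI_law_iff]
  intro s t _ _ ω₀
  have hcol (k : ℕ) (hk : ρ.colliderNodeAt k) : 1 ≤ k := hk.1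
  have hblock : ∀ p ≤ ρ.len, ∀ q ≤ ρ.len, ρ.nodes p ∈ X → ρ.nodes q ∈ Y →
      ∃ k, (p < k ∧ k < q ∨ q < k ∧ k < p) ∧
        (ρ.colliderNodeAt k ∧ ρ.nodes k ∉ Z ∨ ¬ ρ.colliderNodeAt k ∧ ρ.nodes k ∈ Z) :=
    fun p hp q hq hX hY => ρ.exists_blocker_of_sep hG hd hsep hp hq hX hY
  let f := pathVector ρ.nodes ρ.colliderNodeAt ρ.len
  let m := mix ρ.colliderNodeAt (fun k => ρ.nodes k ∈ X) (fun k => ρ.nodes k ∈ Z) (n := ρ.len)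
  have h := ncard_inter_mul_ncard_eq_of_mix (A := {ω | marg X (f ω) ∈ s})
    (B := {ω | marg Y (f ω) ∈ t}) (C := {ω | marg Z (f ω) = marg Z (f ω₀)})
    m mix_mix ?_ ?_ ?_
  · rwa [Set.inter_assoc] at h
  · intro ω _ ω' _
    have : marg X (f (m ω ω')) = marg X (f ω) :=
      (marg_pathVector_eq_iff _ X _ _).2 fun k hk hX =>
        nodeBit_mix_of_mem_left ω ω' hk (hcol k) hX
    rw [Set.mem_ofPred_eq, Set.mem_ofPred_eq, this]
  · intro ω hω ω' hω'
    have hag := (marg_pathVector_eq_iff _ Z _ _).1 (hω.trans hω'.symm)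
    have : marg Y (f (m ω ω')) = marg Y (f ω') :=
      (marg_pathVector_eq_iff _ Y _ _).2 fun k hk hY =>
        nodeBit_mix_of_mem_right (Q := fun k => ρ.nodes k ∈ Y) hag hblock hk (hcol k) hY
    rw [Set.mem_ofPred_eq, Set.mem_ofPred_eq, this]
  · intro ω hω ω' hω'
    have hag := (marg_pathVector_eq_iff _ Z _ _).1 (hω.trans hω'.symm)
    exact ((marg_pathVector_eq_iff _ Z _ _).2 fun k hk hZ =>
      nodeBit_mix_of_mem_cond hag hk (hcol k) hZ).trans hω

/-- The ends of an open route are conditionally dependent under the law of the route. -/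
lemma not_mCI_law (hG : ∀ a b, ¬ G.solid a b) (ρ : G.Route) {X Y Z : Finset V}
    (hends : (ρ.nodes 0 ∈ X ∧ ρ.nodes ρ.len ∈ Y) ∨ (ρ.nodes 0 ∈ Y ∧ ρ.nodes ρ.len ∈ X))
    (hρ : ρ.IsZOpen Z) : ¬ mCI ρ.law X Y Z := by
  rw [isZOpen_iff_of_no_solid hG] at hρ
  rw [mCI_law_iff]
  intro h
  let f := pathVector ρ.nodes ρ.colliderNodeAt ρ.len
  let zero : Fin (ρ.len + 1) → Bool := fun _ => false
  let one : Fin (ρ.len + 1) → Bool := fun _ => true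
  have h0 : ¬ ρ.colliderNodeAt 0 := fun hc => absurd hc.1 (by omega)
  have hlen : ¬ ρ.colliderNodeAt ρ.len := fun hc => lt_irrefl _ hc.2.1
  have hzero (k : ℕ) : nodeBit ρ.colliderNodeAt zero k = false := by
    simp [nodeBit, edgeBit, zero]
  have hone (k : ℕ) : nodeBit ρ.colliderNodeAt one k = !decide (ρ.colliderNodeAt k) := by
    by_cases hc : ρ.colliderNodeAt k <;> simp [nodeBit, edgeBit, one, hc]
  have hXend : ∃ k ≤ ρ.len, ¬ ρ.colliderNodeAt k ∧ ρ.nodes k ∈ X := by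
    rcases hends with h | h
    exacts [⟨0, by omega, h0, h.1⟩, ⟨ρ.len, le_rfl, hlen, h.2⟩]
  have hYend : ∃ k ≤ ρ.len, ¬ ρ.colliderNodeAt k ∧ ρ.nodes k ∈ Y := by
    rcases hends with h | h
    exacts [⟨ρ.len, le_rfl, hlen, h.2⟩, ⟨0, by omega, h0, h.1⟩]
  have key := h {marg X (f zero)} {marg Y (f zero)}ᶜ (measurableSet_singleton _)
    (measurableSet_singleton _).compl zero
  have hempty : {ω | marg X (f ω) ∈ ({marg X (f zero)} : Set (X → ℝ)) ∧
      marg Y (f ω) ∈ ({marg Y (f zero)} : Set (Y → ℝ))ᶜ ∧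
      marg Z (f ω) = marg Z (f zero)} = ∅ := by
    refine Set.eq_empty_iff_forall_notMem.2 ?_
    rintro ω ⟨hX, hY, hZ⟩
    refine hY ((marg_pathVector_eq_iff _ Y _ _).2 fun k hk _ => ?_)
    have hX' := (marg_pathVector_eq_iff _ X _ _).1 hX
    have hZ' := (marg_pathVector_eq_iff _ Z _ _).1 hZ
    have hedge {j : ℕ} (hj : j ≤ ρ.len) :=
      edgeBit_eq_of_colliders_eq_false (col := ρ.colliderNodeAt) (ω := ω)
        (fun k hk hc => (hZ' k hk ((hρ k hk).1 hc)).trans (hzero k)) hj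
    have hedge0 : edgeBit ρ.colliderNodeAt ω 0 = false := by
      obtain ⟨j, hj, hc, hjX⟩ := hXend
      have := (hX' j hj hjX).trans (hzero j)
      simpa only [nodeBit, hc, if_false, hedge hj] using this
    rw [hzero]
    simp only [nodeBit, hedge hk, hedge (show k - 1 ≤ ρ.len by omega), hedge0]
    simp
  have hA : {ω | marg X (f ω) ∈ ({marg X (f zero)} : Set (X → ℝ)) ∧
      marg Z (f ω) = marg Z (f zero)}.ncard ≠ 0 :=
    Set.ncard_ne_zero_of_mem (a := zero) ⟨rfl, rfl⟩
  have hB : {ω | marg Y (f ω) ∈ ({marg Y (f zero)} : Set (Y → ℝ))ᶜ ∧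
      marg Z (f ω) = marg Z (f zero)}.ncard ≠ 0 := by
    refine Set.ncard_ne_zero_of_mem (a := one) ⟨fun hY => ?_, ?_⟩
    · obtain ⟨j, hj, hc, hjY⟩ := hYend
      have := (marg_pathVector_eq_iff _ Y _ _).1 hY j hj hjY
      rw [hzero, hone] at this
      simp [hc] at this
    · refine (marg_pathVector_eq_iff _ Z _ _).2 fun k hk hZ => ?_
      simp [hzero, hone, (hρ k hk).2 hZ]
  change Set.ncard {ω | _ ∧ _ ∧ marg Z (f ω) = marg Z (f zero)} * _ = _ at key
  rw [hempty, Set.ncard_empty, zero_mul] at key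
  exact mul_ne_zero hA hB key.symm

end PreGraph.Route

/-- If every distribution that is Markov with respect to an AMP chain graph `G` is Markov with
respect to `H`, then every separation of `H` is a separation of `G`. -/
lemma sep_of_measGlobalMarkov_imp [DecidableEq V] {G H : PreGraph V}
    (hG : ∀ a b, ¬ G.solid a b)
    (h : ∀ μ : ProbabilityMeasure (V → ℝ), measGlobalMarkov G (↑μ) → measGlobalMarkov H (↑μ))
    {X Y Z : Finset V} (hd : PDisj X Y Z) (hH : H.Sep X Y Z) : G.Sep X Y Z := by
  rintro ⟨ρ, hends, hρ⟩
  exact ρ.not_mCI_law hG hends hρ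
    (h ⟨ρ.law, inferInstance⟩ (ρ.measGlobalMarkov_law hG) X Y Z hd hH)

end RouteLaw

/-- **Theorem 1 (AMP case).** Two AMP chain graphs `G` and `H` over the same finite vertex
set are Markov equivalent (the probability distributions on `ℝ^V` satisfying the global
Markov property with respect to `G` are exactly those satisfying it with respect to `H`)
if and only if they represent the same separations. -/
theorem amp_markov_equivalent_iff_same_separations
    {V : Type*} [Fintype V] [DecidableEq V] (G H : ChainGraph V)
    (hG : G.IsAMP) (hH : H.IsAMP) :
    ({μ : ProbabilityMeasure (V → ℝ) | measGlobalMarkov G.toPreGraph (↑μ)} =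
      {μ : ProbabilityMeasure (V → ℝ) | measGlobalMarkov H.toPreGraph (↑μ)}) ↔
    ∀ X Y Z : Finset V, PDisj X Y Z →
      (G.toPreGraph.Sep X Y Z ↔ H.toPreGraph.Sep X Y Z) := by
  constructor
  · intro h X Y Z hd
    exact ⟨sep_of_measGlobalMarkov_imp hH (fun μ hμ => h.symm.subset hμ) hd,
      sep_of_measGlobalMarkov_imp hG (fun μ hμ => h.subset hμ) hd⟩
  · intro h
    ext μ
    exact forall₄_congr fun X Y Z hd => by rw [h X Y Z hd]
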